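/- Let b be prime, α ≥ 2 an integer, m ≤ n positive integers, p ∈ 𝔽_b[x] with deg(p) = n, q = (q_1,…,q_s) ∈ 𝔽_b[x]^s, γ_1,…,γ_s ≥ 0 weights and D > 0 a constant. Let 𝒫(q,p) = {z_0,…,z_{b^m−1}} ⊆ G^s be the higher order polynomial lattice point set. Then B_α(q,p) = −1 + (1/b^m) Σ_{h=0}^{b^m−1} ∏_{j=1}^{s} [ 1 + γ_j^{1/2} D^{1/2} χ_b(Φ_b(z_{h,j})) ], where χ_b(z) = Σ_{k=1}^{∞} b^{−μ_α(k)} W_k(z). -/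

import Mathlib

namespace QMC

/-- the `i`-th `b`-adic digit of `k`. -/
def digit (b k i : ℕ) : ℕ := k / b ^ i % b

/-- the `k`-th character `W_k` on `G = (ℤ/bℤ)^ℕ`, where `z i = ζ_{i+1}`. -/
noncomputable def W (b k : ℕ) (z : ℕ → ZMod b) : ℂ :=
  Complex.exp (2 * Real.pi * Complex.I / b) ^
    ∑ i ∈ Finset.range (k + 1), digit b k i * (z i).val

/-- `μ_α(k) = a₁ + ⋯ + a_{min(v,α)}`, the sum of the `α` largest positions (counted
from `1`) of nonzero `b`-adic digits of `k`; `μ_α(0) = 0`. -/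
def mualpha (b α k : ℕ) : ℕ :=
  (((((Finset.range (k + 1)).filter fun i => digit b k i ≠ 0).sort (· ≤ ·)).reverse.take
    α).map (· + 1)).sum

/-- the set `E` of positive integers whose `b`-adic digit sum is divisible by `b`. -/
def Eset (b : ℕ) : Set ℕ := {k | k ≠ 0 ∧ (b : ℕ) ∣ (Nat.digits b k).sum}

/-- `χ_b(z) = Σ_{k ≥ 1} b^{-μ_α(k)} W_k(z)`. -/
noncomputable def chi (b α : ℕ) (z : ℕ → ZMod b) : ℂ :=
  ∑' k : ℕ, ((b : ℂ) ^ mualpha b α (k + 1))⁻¹ * W b (k + 1) z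

/-- the `b`-adic tent transformation `Φ_b : G → G`. -/
def tent (b : ℕ) (z : ℕ → ZMod b) : ℕ → ZMod b := fun i => z (i + 1) - z 0

/-- the polynomial over `𝔽_b` whose coefficients are the `b`-adic digits of `h`. -/
noncomputable def natPoly (b h : ℕ) : Polynomial (ZMod b) :=
  ∑ i ∈ Finset.range (h + 1), Polynomial.C ((digit b h i : ℕ) : ZMod b) * Polynomial.X ^ i

/-- the truncated polynomial `tr_n(k)(x) = κ₀ + κ₁ x + ⋯ + κ_{n-1} x^{n-1}`. -/
noncomputable def trunc (b n k : ℕ) : Polynomial (ZMod b) :=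
  ∑ i ∈ Finset.range n, Polynomial.C ((digit b k i : ℕ) : ZMod b) * Polynomial.X ^ i

/-- the point `v_n(h q / p) ∈ G` of a higher order polynomial lattice point set. -/
noncomputable def hoPoint (b : ℕ) [Fact b.Prime] (p q : Polynomial (ZMod b)) (n h : ℕ) :
    ℕ → ZMod b := fun i =>
  if i < n then ((Polynomial.X ^ n * natPoly b h * q) / p).coeff (n - (i + 1)) else 0

/-- the quality criterion `B_α((q_1,…,q_τ), p)`. -/
noncomputable def Bcrit (b α m n : ℕ) [Fact b.Prime] (γ : ℕ → ℝ) (D : ℝ)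
    (p : Polynomial (ZMod b)) (τ : ℕ) (q : ℕ → Polynomial (ZMod b)) : ℝ :=
  ∑ u ∈ (Finset.range τ).powerset.filter (fun u => u.Nonempty),
    Real.sqrt (∏ j ∈ u, γ j) * Real.sqrt D ^ u.card *
      ∑' f : {f : ℕ → ℕ // (∀ j ∈ u, f j ∈ Eset b) ∧ (∀ j ∉ u, f j = 0) ∧
          ((∑ j ∈ Finset.range τ, trunc b n (f j) * q j) % p).degree <
            ((n - m : ℕ) : WithBot ℕ)},
        ((b : ℝ) ^ ∑ j ∈ u, mualpha b α (f.1 j / b))⁻¹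

/-!
The tent transformation acts on characters by `W_k ∘ Φ_b = W_{k'}`, where `k'` is obtained from `k`
by putting in front of its digits the one digit that makes the digit sum divisible by `b`. The map
`k ↦ k'` is a bijection from the positive integers onto `E` with inverse `⌊·/b⌋`, so
`χ_b(Φ_b(z)) = ∑_{k ∈ E} b^{-μ_α(⌊k/b⌋)} W_k(z)`. Since `α ≥ 2` this series converges absolutely,
products of such series may be multiplied out, and averaging over the point set selects the dual
lattice: `W_k(v_n(hq/p))` is a fixed additive character of `𝔽_b` applied to the coefficient of
`x⁻¹` in `h · tr_n(k) q / p`, and the characters of the digits of `h` are orthogonal.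
-/

open Finset Polynomial

section Digits

variable {b : ℕ}

lemma digit_eq_zero_of_lt_pow {k i : ℕ} (h : k < b ^ i) : digit b k i = 0 := by
  rw [digit, Nat.div_eq_of_lt h, Nat.zero_mod]

lemma digit_eq_zero_of_lt [b.AtLeastTwo] {k i : ℕ} (h : k < i) : digit b k i = 0 :=
  digit_eq_zero_of_lt_pow (h.trans (Nat.lt_pow_self Nat.AtLeastTwo.one_lt))

lemma digit_zero_right (k : ℕ) : digit b k 0 = k % b := by
  rw [digit, pow_zero, Nat.div_one]

lemma digit_succ (k i : ℕ) : digit b k (i + 1) = digit b (k / b) i := by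
  rw [digit, digit, pow_succ', Nat.div_div_eq_div_mul]

lemma digit_mod_pow {k a i : ℕ} (hi : i < a) : digit b (k % b ^ a) i = digit b k i := by
  obtain ⟨c, rfl⟩ := Nat.exists_eq_add_of_lt hi
  rw [digit, digit, add_assoc, pow_add, Nat.mod_mul_right_div_self,
    Nat.mod_mod_of_dvd _ (dvd_pow_self b c.succ_ne_zero)]

lemma div_pow_log_lt [b.AtLeastTwo] (k : ℕ) : k / b ^ Nat.log b k < b := by
  rw [Nat.div_lt_iff_lt_mul (Nat.pow_pos (NeZero.pos b)), ← pow_succ']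
  exact Nat.lt_pow_succ_log_self Nat.AtLeastTwo.one_lt k

lemma digit_log_ne_zero [b.AtLeastTwo] {k : ℕ} (hk : k ≠ 0) : digit b k (Nat.log b k) ≠ 0 := by
  rw [digit, Nat.mod_eq_of_lt (div_pow_log_lt k)]
  exact (Nat.div_pos (Nat.pow_log_le_self b hk) (Nat.pow_pos (NeZero.pos b))).ne'

lemma sum_digits_eq_mod_add [b.AtLeastTwo] (k : ℕ) :
    (Nat.digits b k).sum = k % b + (Nat.digits b (k / b)).sum := by
  rcases k.eq_zero_or_pos with rfl | hk
  · simp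
  · rw [Nat.digits_def' Nat.AtLeastTwo.one_lt hk, List.sum_cons]

lemma sum_digits_eq_sum_digit [b.AtLeastTwo] {k N : ℕ} (hk : k < b ^ N) :
    (Nat.digits b k).sum = ∑ i ∈ range N, digit b k i := by
  induction N generalizing k with
  | zero => simp [show k = 0 by simpa using hk]
  | succ N ih =>
    have hdiv : k / b < b ^ N := by rwa [Nat.div_lt_iff_lt_mul (NeZero.pos b), ← pow_succ]
    simp only [sum_digits_eq_mod_add k, sum_range_succ', digit_succ, digit_zero_right, ih hdiv,
      add_comm]

lemma sum_range_eq_sum_range_of_eq_zero {A : Type*} [AddCommMonoid A] {f : ℕ → A} {M N : ℕ}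
    (hM : ∀ i ≥ M, f i = 0) (hN : ∀ i ≥ N, f i = 0) :
    ∑ i ∈ range M, f i = ∑ i ∈ range N, f i := by
  rcases le_total M N with h | h
  · exact (eventually_constant_sum hM h).symm
  · exact eventually_constant_sum hN h

lemma sum_range_pow_prod_digit {R : Type*} [CommSemiring R] (m : ℕ) (F : ℕ → ℕ → R) :
    ∑ h ∈ range (b ^ m), ∏ i ∈ range m, F i (digit b h i) =
      ∏ i ∈ range m, ∑ d ∈ range b, F i d := by
  simp only [sum_range, prod_range]
  rw [Fintype.prod_sum, ← finFunctionFinEquiv.symm.sum_comp]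
  simp only [finFunctionFinEquiv_symm_apply_val, digit]

lemma natPoly_eq_trunc [b.AtLeastTwo] {m h : ℕ} (hh : h < b ^ m) : natPoly b h = trunc b m h := by
  refine sum_range_eq_sum_range_of_eq_zero (fun i hi => ?_) fun i hi => ?_
  · simp [digit_eq_zero_of_lt (b := b) (Nat.lt_of_succ_le hi)]
  · simp [digit_eq_zero_of_lt_pow (hh.trans_le (Nat.pow_le_pow_right (NeZero.pos b) hi))]

end Digits

section Characters

variable {b : ℕ}

lemma addChar_map_sum {ι A R : Type*} [AddCommMonoid A] [CommMonoid R] (ψ : AddChar A R)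
    (s : Finset ι) (f : ι → A) : ψ (∑ j ∈ s, f j) = ∏ j ∈ s, ψ (f j) :=
  map_prod ψ.toMonoidHom (fun j => Multiplicative.ofAdd (f j)) s

lemma W_zero (z : ℕ → ZMod b) : W b 0 z = 1 := by
  simp [W, digit]

lemma W_eq_stdAddChar [NeZero b] (k : ℕ) (z : ℕ → ZMod b) :
    W b k z = ZMod.stdAddChar (∑ i ∈ range (k + 1), (digit b k i : ZMod b) * z i) := by
  have hcast : ∑ i ∈ range (k + 1), (digit b k i : ZMod b) * z i =
      ((∑ i ∈ range (k + 1), digit b k i * (z i).val : ℕ) : ℤ) := by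
    push_cast
    simp only [ZMod.natCast_val, ZMod.cast_id]
  rw [hcast, ZMod.stdAddChar_coe, W, ← Complex.exp_nat_mul]
  congr 1
  push_cast
  ring

lemma W_eq_stdAddChar_of_eq_zero [b.AtLeastTwo] {k N : ℕ} {z : ℕ → ZMod b}
    (hN : ∀ i ≥ N, (digit b k i : ZMod b) * z i = 0) :
    W b k z = ZMod.stdAddChar (∑ i ∈ range N, (digit b k i : ZMod b) * z i) := by
  rw [W_eq_stdAddChar, sum_range_eq_sum_range_of_eq_zero (fun i hi => ?_) hN]
  rw [digit_eq_zero_of_lt (Nat.lt_of_succ_le hi), Nat.cast_zero, zero_mul]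

lemma W_eq_stdAddChar_of_lt_pow [b.AtLeastTwo] {k N : ℕ} (hk : k < b ^ N) (z : ℕ → ZMod b) :
    W b k z = ZMod.stdAddChar (∑ i ∈ range N, (digit b k i : ZMod b) * z i) := by
  refine W_eq_stdAddChar_of_eq_zero fun i hi => ?_
  rw [digit_eq_zero_of_lt_pow (hk.trans_le (Nat.pow_le_pow_right (NeZero.pos b) hi)),
    Nat.cast_zero, zero_mul]

lemma norm_W [NeZero b] (k : ℕ) (z : ℕ → ZMod b) : ‖W b k z‖ = 1 := by
  rw [W_eq_stdAddChar, AddChar.norm_apply]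

lemma sum_range_natCast_zmod [NeZero b] {A : Type*} [AddCommMonoid A] (f : ZMod b → A) :
    ∑ d ∈ range b, f d = ∑ x, f x := by
  refine sum_bij' (fun d _ => (d : ZMod b)) (fun x _ => x.val) ?_ ?_ ?_ ?_ ?_
  · simp
  · simp [ZMod.val_lt]
  · exact fun d hd => ZMod.val_cast_of_lt (mem_range.1 hd)
  · simp
  · simp

open Classical in
lemma sum_range_stdAddChar_mul [NeZero b] (c : ZMod b) :
    ∑ d ∈ range b, (ZMod.stdAddChar ((d : ZMod b) * c) : ℂ) = if c = 0 then (b : ℂ) else 0 := by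
  rw [sum_range_natCast_zmod fun x => (ZMod.stdAddChar (x * c) : ℂ),
    AddChar.sum_mulShift c (ZMod.isPrimitive_stdAddChar b), ZMod.card, Nat.cast_ite, Nat.cast_zero]

open Classical in
lemma average_stdAddChar_digits [NeZero b] (m : ℕ) (c : ℕ → ZMod b) :
    ((b : ℂ) ^ m)⁻¹ * ∑ h ∈ range (b ^ m),
        (ZMod.stdAddChar (∑ i ∈ range m, (digit b h i : ZMod b) * c i) : ℂ) =
      if ∀ i < m, c i = 0 then 1 else 0 := by
  simp only [addChar_map_sum]
  rw [sum_range_pow_prod_digit m fun i d => (ZMod.stdAddChar ((d : ZMod b) * c i) : ℂ)]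
  simp only [sum_range_stdAddChar_mul, prod_ite_zero, mem_range, prod_const, card_range]
  have hb : (b : ℂ) ^ m ≠ 0 := pow_ne_zero m (Nat.cast_ne_zero.2 (NeZero.ne b))
  rw [mul_ite, mul_zero, inv_mul_cancel₀ hb]

end Characters

section Tent

variable {b : ℕ}

/-- The number with quotient `⌊·/b⌋ = k` whose lowest digit makes the `b`-adic digit sum divisible
by `b`; for `k > 0` it is the only element of `E` with that quotient. -/
def prependCheckDigit (b k : ℕ) : ℕ :=
  b * k + (-((Nat.digits b k).sum : ZMod b)).val

lemma prependCheckDigit_div [NeZero b] (k : ℕ) : prependCheckDigit b k / b = k := by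
  rw [prependCheckDigit, Nat.mul_add_div (NeZero.pos b), Nat.div_eq_of_lt (ZMod.val_lt _), add_zero]

lemma prependCheckDigit_mod [NeZero b] (k : ℕ) :
    prependCheckDigit b k % b = (-((Nat.digits b k).sum : ZMod b)).val := by
  rw [prependCheckDigit, Nat.mul_add_mod, Nat.mod_eq_of_lt (ZMod.val_lt _)]

lemma prependCheckDigit_mem_Eset [b.AtLeastTwo] {k : ℕ} (hk : k ≠ 0) :
    prependCheckDigit b k ∈ Eset b := by
  refine ⟨fun h => hk ?_, ?_⟩
  · rw [← prependCheckDigit_div (b := b) k, h, Nat.zero_div]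
  · rw [sum_digits_eq_mod_add, prependCheckDigit_div, prependCheckDigit_mod,
      ← ZMod.natCast_eq_zero_iff, Nat.cast_add, ZMod.natCast_val, ZMod.cast_id, neg_add_cancel]

lemma prependCheckDigit_div_of_mem_Eset [b.AtLeastTwo] {k : ℕ} (hk : k ∈ Eset b) :
    prependCheckDigit b (k / b) = k := by
  have hsum : ((k % b : ℕ) : ZMod b) + (Nat.digits b (k / b)).sum = 0 := by
    rw [← Nat.cast_add, ← sum_digits_eq_mod_add, ZMod.natCast_eq_zero_iff]
    exact hk.2
  rw [prependCheckDigit, ← eq_neg_of_add_eq_zero_left hsum, ZMod.val_natCast, Nat.mod_mod,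
    Nat.div_add_mod]

lemma div_ne_zero_of_mem_Eset [b.AtLeastTwo] {k : ℕ} (hk : k ∈ Eset b) : k / b ≠ 0 := by
  intro h
  apply hk.1
  rw [← prependCheckDigit_div_of_mem_Eset hk, h]
  simp [prependCheckDigit]

/-- The enumeration of `E` by its quotients `⌊k/b⌋ = 1, 2, 3, …`, shifted to start at `0` as the
index of the series `chi` does. -/
def natEquivEset (b : ℕ) [b.AtLeastTwo] : ℕ ≃ Eset b where
  toFun k := ⟨prependCheckDigit b (k + 1), prependCheckDigit_mem_Eset k.succ_ne_zero⟩
  invFun e := e / b - 1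
  left_inv k := by simp only [prependCheckDigit_div, Nat.add_sub_cancel]
  right_inv e := Subtype.ext <| by
    simp only [Nat.sub_add_cancel (Nat.pos_of_ne_zero (div_ne_zero_of_mem_Eset e.2)),
      prependCheckDigit_div_of_mem_Eset e.2]

lemma natEquivEset_div [b.AtLeastTwo] (k : ℕ) : (natEquivEset b k : ℕ) / b = k + 1 :=
  prependCheckDigit_div (k + 1)

lemma W_tent [b.AtLeastTwo] (k : ℕ) (z : ℕ → ZMod b) :
    W b k (tent b z) = W b (prependCheckDigit b k) z := by
  have hk : k < b ^ k := Nat.lt_pow_self Nat.AtLeastTwo.one_lt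
  have hk' : prependCheckDigit b k < b ^ (k + 1) := by
    rwa [pow_succ, ← Nat.div_lt_iff_lt_mul (NeZero.pos b), prependCheckDigit_div]
  rw [W_eq_stdAddChar_of_lt_pow hk, W_eq_stdAddChar_of_lt_pow hk', sum_range_succ',
    digit_zero_right, prependCheckDigit_mod, sum_digits_eq_sum_digit hk]
  simp only [digit_succ, prependCheckDigit_div, tent, mul_sub, sum_sub_distrib, ← sum_mul,
    ZMod.natCast_val, ZMod.cast_id, Nat.cast_sum, neg_mul, ← sub_eq_add_neg]

lemma chi_tent [b.AtLeastTwo] (α : ℕ) (z : ℕ → ZMod b) :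
    chi b α (tent b z) = ∑' e : Eset b, ((b : ℂ) ^ mualpha b α (e / b))⁻¹ * W b e z := by
  rw [chi, ← (natEquivEset b).tsum_eq]
  simp only [natEquivEset_div, W_tent]
  rfl

end Tent

section LaurentResidue

variable {K : Type*} [Field K]

lemma polynomial_add_div (A B p : K[X]) : (A + B) / p = A / p + B / p := by
  rcases eq_or_ne p 0 with rfl | hp
  · simp only [EuclideanDomain.div_zero, add_zero]
  · refine mul_left_cancel₀ hp ?_
    linear_combination EuclideanDomain.div_add_mod (A + B) p - EuclideanDomain.div_add_mod A p -
      EuclideanDomain.div_add_mod B p - add_mod A B p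

lemma polynomial_smul_div (c : K) (A p : K[X]) : (c • A) / p = c • (A / p) := by
  rcases eq_or_ne p 0 with rfl | hp
  · simp only [EuclideanDomain.div_zero, smul_zero]
  · have hmod : (c • A) % p = c • (A % p) := smul_modByMonic c A
    refine mul_left_cancel₀ hp ?_
    simp only [smul_eq_C_mul] at hmod ⊢
    linear_combination EuclideanDomain.div_add_mod (C c * A) p -
      C c * EuclideanDomain.div_add_mod A p - hmod

lemma polynomial_mul_div_eq_add (B A p : K[X]) : B * A / p = B * (A / p) + B * (A % p) / p := by
  rcases eq_or_ne p 0 with rfl | hp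
  · simp only [EuclideanDomain.div_zero, mul_zero, add_zero]
  · calc B * A / p = (p * (B * (A / p)) + B * (A % p)) / p := by
          congr 1
          linear_combination -B * EuclideanDomain.div_add_mod A p
      _ = B * (A / p) + B * (A % p) / p := by
          rw [polynomial_add_div, mul_div_cancel_left₀ _ hp]

lemma degree_X_pow_mul_div_lt {p R : K[X]} (hR : R.degree < p.degree) (t : ℕ) :
    (X ^ t * R / p).degree < (t : WithBot ℕ) := by
  have hp : p ≠ 0 := ne_zero_of_degree_gt hR
  by_cases hlt : (X ^ t * R).degree < p.degree
  · rw [(Polynomial.div_eq_zero_iff hp).2 hlt, degree_zero]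
    exact WithBot.bot_lt_coe t
  · have hadd := degree_add_div hp (not_lt.1 hlt)
    rw [degree_mul, degree_X_pow] at hadd
    by_contra hle
    have hgt : (t : WithBot ℕ) + R.degree < p.degree + (X ^ t * R / p).degree :=
      calc (t : WithBot ℕ) + R.degree < t + p.degree :=
            WithBot.add_lt_add_left WithBot.coe_ne_bot hR
        _ ≤ (X ^ t * R / p).degree + p.degree := by gcongr; exact not_lt.1 hle
        _ = p.degree + (X ^ t * R / p).degree := add_comm _ _
    exact hgt.ne' hadd

lemma coeff_X_pow_mul_div (A p : K[X]) (t : ℕ) : (X ^ t * A / p).coeff t = (A / p).coeff 0 := by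
  rcases eq_or_ne p 0 with rfl | hp
  · simp only [EuclideanDomain.div_zero, coeff_zero]
  · have hquot := coeff_X_pow_mul (A / p) t 0
    rw [zero_add] at hquot
    rw [polynomial_mul_div_eq_add, coeff_add, hquot,
      coeff_eq_zero_of_degree_lt (degree_X_pow_mul_div_lt (degree_mod_lt A hp) t), add_zero]

/-- The coefficient of `x⁻¹` in the Laurent expansion of `A / p`, read off as the constant
coefficient of the polynomial part of `x A / p`. -/
noncomputable def laurentResidue (p : K[X]) : K[X] →ₗ[K] K where
  toFun A := (X * A / p).coeff 0
  map_add' A B := by rw [mul_add, polynomial_add_div, coeff_add]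
  map_smul' c A := by rw [mul_smul_comm, polynomial_smul_div, coeff_smul, RingHom.id_apply]

lemma laurentResidue_X_pow_mul (p A : K[X]) (i : ℕ) :
    laurentResidue p (X ^ i * A) = (X ^ (i + 1) * (A % p) / p).coeff 0 := by
  have hquot : (X ^ (i + 1) * (A / p)).coeff 0 = 0 := by rw [pow_succ', mul_assoc, coeff_X_mul_zero]
  change (X * (X ^ i * A) / p).coeff 0 = _
  rw [← mul_assoc, ← pow_succ', polynomial_mul_div_eq_add, coeff_add, hquot, zero_add]

lemma coeff_zero_div_ne_zero {p A : K[X]} (hp : p ≠ 0) (h : A.degree = p.degree) :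
    (A / p).coeff 0 ≠ 0 := by
  have hquot : A / p ≠ 0 := fun h0 => ((Polynomial.div_eq_zero_iff hp).1 h0).ne h
  have hadd := degree_add_div hp h.ge
  rw [h, degree_eq_natDegree hp, degree_eq_natDegree hquot] at hadd
  have hnat : (A / p).natDegree = 0 := by
    norm_cast at hadd
    omega
  rw [← hnat]
  exact leadingCoeff_ne_zero.2 hquot

-- A residue `A % p` of degree `e ≥ d` is detected by `i = deg p - 1 - e`: for this `i` the degree
-- of `x ^ (i + 1) (A % p)` is that of `p`, so its quotient by `p` is a nonzero constant.
lemma degree_mod_lt_iff_laurentResidue_eq_zero {p : K[X]} (hp : p ≠ 0) (A : K[X]) (d : ℕ) :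
    (A % p).degree < (d : WithBot ℕ) ↔
      ∀ i, i + d < p.natDegree → laurentResidue p (X ^ i * A) = 0 := by
  simp only [laurentResidue_X_pow_mul]
  constructor
  · intro hdeg i hi
    rw [(Polynomial.div_eq_zero_iff hp).2, coeff_zero]
    calc (X ^ (i + 1) * (A % p)).degree = ((i + 1 : ℕ) : WithBot ℕ) + (A % p).degree := by
          rw [degree_mul, degree_X_pow]
      _ < ((i + 1 : ℕ) : WithBot ℕ) + d := WithBot.add_lt_add_left WithBot.coe_ne_bot hdeg
      _ ≤ p.natDegree := by norm_cast; omega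
      _ = p.degree := (degree_eq_natDegree hp).symm
  · intro hres
    by_contra hdeg
    have hmod : A % p ≠ 0 := fun h0 => hdeg (by rw [h0, degree_zero]; exact WithBot.bot_lt_coe d)
    have hlow : d ≤ (A % p).natDegree := le_natDegree_of_coe_le_degree (not_lt.1 hdeg)
    have hhigh : (A % p).natDegree < p.natDegree := natDegree_lt_natDegree hmod (degree_mod_lt A hp)
    refine coeff_zero_div_ne_zero hp ?_ (hres (p.natDegree - 1 - (A % p).natDegree) (by omega))
    rw [degree_mul, degree_X_pow, degree_eq_natDegree hmod, degree_eq_natDegree hp]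
    norm_cast
    omega

end LaurentResidue

section Lattice

instance atLeastTwo_of_fact_prime (b : ℕ) [Fact b.Prime] : b.AtLeastTwo :=
  ⟨(Fact.out : b.Prime).two_le⟩

variable {b : ℕ} [Fact b.Prime]

lemma hoPoint_of_lt (p q : (ZMod b)[X]) {n i : ℕ} (hi : i < n) (h : ℕ) :
    hoPoint b p q n h i = laurentResidue p (X ^ i * (natPoly b h * q)) := by
  have hX : X ^ n * natPoly b h * q = X ^ (n - (i + 1)) * (X * (X ^ i * (natPoly b h * q))) := by
    simp only [← mul_assoc, ← pow_succ, ← pow_add]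
    congr 3
    omega
  rw [hoPoint, if_pos hi, hX, coeff_X_pow_mul_div]
  rfl

lemma laurentResidue_trunc_mul (p A : (ZMod b)[X]) (n k : ℕ) :
    laurentResidue p (trunc b n k * A) =
      ∑ i ∈ range n, (digit b k i : ZMod b) * laurentResidue p (X ^ i * A) := by
  simp only [trunc, sum_mul, map_sum, ← smul_eq_C_mul, smul_mul_assoc, map_smul, smul_eq_mul]

lemma W_hoPoint (p q : (ZMod b)[X]) (n h k : ℕ) :
    W b k (hoPoint b p q n h) =
      ZMod.stdAddChar (laurentResidue p (natPoly b h * (trunc b n k * q))) := by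
  have hzero : ∀ i ≥ n, (digit b k i : ZMod b) * hoPoint b p q n h i = 0 := fun i hi => by
    rw [hoPoint, if_neg (not_lt.2 hi), mul_zero]
  rw [W_eq_stdAddChar_of_eq_zero hzero, mul_left_comm, laurentResidue_trunc_mul]
  congr 1
  exact sum_congr rfl fun i hi => by rw [hoPoint_of_lt p q (mem_range.1 hi)]

variable {ι : Type*}

/-- The dual polynomial lattice `𝒫^⊥(q, p)`, with coordinates indexed by a finite set `J`. -/
def dualLattice (m n : ℕ) (p : (ZMod b)[X]) (J : Finset ι) (q : ι → (ZMod b)[X]) : Set (ι → ℕ) :=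
  {k | ((∑ j ∈ J, trunc b n (k j) * q j) % p).degree < ((n - m : ℕ) : WithBot ℕ)}

lemma mem_dualLattice_iff {m n : ℕ} (hmn : m ≤ n) {p : (ZMod b)[X]} (hp : p.degree = n)
    {J : Finset ι} {q : ι → (ZMod b)[X]} {k : ι → ℕ} :
    k ∈ dualLattice m n p J q ↔
      ∀ i < m, laurentResidue p (X ^ i * ∑ j ∈ J, trunc b n (k j) * q j) = 0 := by
  have hp0 : p ≠ 0 := by rintro rfl; simp at hp
  have hi (i : ℕ) : i + (n - m) < n ↔ i < m := by omega
  simp only [dualLattice, Set.mem_ofPred_eq, degree_mod_lt_iff_laurentResidue_eq_zero hp0,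
    natDegree_eq_of_degree_eq_some hp, hi]

lemma average_prod_W_hoPoint {m n : ℕ} (hmn : m ≤ n) {p : (ZMod b)[X]} (hp : p.degree = n)
    (J : Finset ι) (q : ι → (ZMod b)[X]) (k : ι → ℕ) :
    ((b : ℂ) ^ m)⁻¹ * ∑ h ∈ range (b ^ m), ∏ j ∈ J, W b (k j) (hoPoint b p (q j) n h) =
      (dualLattice m n p J q).indicator 1 k := by
  classical
  rw [Set.indicator_apply, if_congr (mem_dualLattice_iff hmn hp) rfl rfl, Pi.one_apply,
    ← average_stdAddChar_digits]
  congr 1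
  refine sum_congr rfl fun h hh => ?_
  simp only [W_hoPoint, ← addChar_map_sum, ← map_sum, ← mul_sum]
  rw [natPoly_eq_trunc (mem_range.1 hh), laurentResidue_trunc_mul]

end Lattice

section Summability

variable {b : ℕ} [b.AtLeastTwo]

lemma sum_succ_le_sum_take {l : List ℕ} (hl : l.Pairwise (· > ·)) {t : Finset ℕ}
    (ht : ∀ i ∈ t, i ∈ l) {α : ℕ} (hcard : #t ≤ α) :
    ∑ i ∈ t, (i + 1) ≤ ((l.take α).map (· + 1)).sum := by
  induction l generalizing t α with
  | nil => simp [eq_empty_of_forall_notMem fun i hi => List.not_mem_nil (ht i hi)]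
  | cons a l ih =>
    rcases t.eq_empty_or_nonempty with rfl | hne
    · exact Nat.zero_le _
    obtain ⟨hgt, hl⟩ := List.pairwise_cons.1 hl
    have hmax : t.max' hne ∈ t := t.max'_mem hne
    have hle : t.max' hne ≤ a := by
      rcases List.mem_cons.1 (ht _ hmax) with h | h
      · exact h.le
      · exact (hgt _ h).le
    have hrest : ∀ i ∈ t.erase (t.max' hne), i ∈ l := fun i hi =>
      (List.mem_cons.1 (ht i (mem_of_mem_erase hi))).resolve_left
        ((t.lt_max'_of_mem_erase_max' hne hi).trans_le hle).ne
    have hpos : 0 < #t := card_pos.2 hne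
    obtain ⟨β, rfl⟩ := Nat.exists_eq_add_of_le' (hpos.trans_le hcard)
    have hcard' : #(t.erase (t.max' hne)) ≤ β := by
      rw [card_erase_of_mem hmax]
      omega
    rw [← add_sum_erase t _ hmax, List.take_succ_cons, List.map_cons, List.sum_cons]
    exact Nat.add_le_add (Nat.succ_le_succ hle) (ih hl hrest hcard')

lemma sum_succ_le_mualpha {k α : ℕ} {t : Finset ℕ} (ht : ∀ i ∈ t, digit b k i ≠ 0)
    (hcard : #t ≤ α) : ∑ i ∈ t, (i + 1) ≤ mualpha b α k := by
  refine sum_succ_le_sum_take (List.pairwise_reverse.2 (sortedLT_sort _).pairwise) (fun i hi => ?_)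
    hcard
  simp only [List.mem_reverse, mem_sort, mem_filter, mem_range]
  exact ⟨Nat.lt_succ_of_le (not_lt.1 fun hlt => ht i hi (digit_eq_zero_of_lt hlt)), ht i hi⟩

lemma pow_log_mul_mod_le_pow_mualpha {α : ℕ} (hα : 2 ≤ α) (k : ℕ) :
    b ^ Nat.log b k * (k % b ^ Nat.log b k + 1) ≤ b ^ mualpha b α k := by
  have hb : 1 < b := Nat.AtLeastTwo.one_lt
  rcases eq_or_ne k 0 with rfl | hk
  · simpa [Nat.mod_one] using Nat.one_le_pow _ _ (NeZero.pos b)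
  set a := Nat.log b k
  have hlead : digit b k a ≠ 0 := digit_log_ne_zero hk
  rcases eq_or_ne (k % b ^ a) 0 with hr | hr
  · have hsum := sum_succ_le_mualpha (b := b) (k := k) (t := {a}) (α := α) (by simpa using hlead)
      (by rw [card_singleton]; omega)
    rw [sum_singleton] at hsum
    rw [hr, zero_add, mul_one]
    exact Nat.pow_le_pow_right hb.le (by omega)
  · set c := Nat.log b (k % b ^ a)
    have hca : c < a := Nat.log_lt_of_lt_pow hr (Nat.mod_lt _ (Nat.pow_pos (NeZero.pos b)))
    have hsecond : digit b k c ≠ 0 := by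
      rw [← digit_mod_pow hca]
      exact digit_log_ne_zero hr
    have hsum := sum_succ_le_mualpha (b := b) (k := k) (t := {a, c}) (α := α)
      (by simp [hlead, hsecond]) (by rwa [card_pair hca.ne'])
    rw [sum_pair hca.ne'] at hsum
    calc b ^ a * (k % b ^ a + 1) ≤ b ^ a * b ^ (c + 1) :=
          Nat.mul_le_mul_left _ (Nat.lt_pow_succ_log_self hb _)
      _ = b ^ (a + (c + 1)) := (pow_add b a (c + 1)).symm
      _ ≤ b ^ mualpha b α k := Nat.pow_le_pow_right hb.le (by omega)

lemma inv_mul_le_rpow_mul_rpow {x y : ℝ} (hx : 0 < x) (hxy : x ≤ y) :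
    (y * x)⁻¹ ≤ y ^ (-(1 / 2) : ℝ) * x ^ (-(3 / 2) : ℝ) := by
  have hy : 0 < y := hx.trans_le hxy
  calc (y * x)⁻¹ = y ^ (-(1 / 2) : ℝ) * (y ^ (-(1 / 2) : ℝ) * x⁻¹) := by
        rw [← mul_assoc, ← Real.rpow_add hy, mul_inv, ← Real.rpow_neg_one y]
        norm_num
    _ ≤ y ^ (-(1 / 2) : ℝ) * (x ^ (-(1 / 2) : ℝ) * x⁻¹) := by
        gcongr ?_ * (?_ * _)
        exact Real.rpow_le_rpow_of_nonpos hx hxy (by norm_num)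
    _ = y ^ (-(1 / 2) : ℝ) * x ^ (-(3 / 2) : ℝ) := by
        rw [← Real.rpow_neg_one x, ← Real.rpow_add hx]
        norm_num

lemma injective_log_mod_digit :
    Function.Injective fun k : ℕ =>
      ((Nat.log b k, k % b ^ Nat.log b k), Fin.ofNat b (k / b ^ Nat.log b k)) := by
  intro k l hkl
  simp only [Prod.mk.injEq, Fin.ext_iff, Fin.val_ofNat, Nat.mod_eq_of_lt (div_pow_log_lt _)] at hkl
  obtain ⟨⟨hlog, hmod⟩, hdiv⟩ := hkl
  rw [← Nat.div_add_mod k (b ^ Nat.log b k), hdiv, hmod, hlog, Nat.div_add_mod]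

-- With `a = log k` and `r = k % b ^ a` the summand is at most `b ^ (-a / 2) (r + 1) ^ (-3 / 2)`,
-- and each pair `(a, r)` occurs at most `b` times, once for every leading digit.
lemma summable_inv_pow_log_mul_mod :
    Summable fun k : ℕ => ((b : ℝ) ^ Nat.log b k * ((k % b ^ Nat.log b k + 1 : ℕ) : ℝ))⁻¹ := by
  have hb : (1 : ℝ) < b := Nat.one_lt_cast.2 Nat.AtLeastTwo.one_lt
  have hgeom : Summable fun a : ℕ => ((b : ℝ) ^ a) ^ (-(1 / 2) : ℝ) := by
    simp only [← Real.rpow_pow_comm (zero_le_one.trans hb.le)]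
    exact summable_geometric_of_lt_one (by positivity)
      (Real.rpow_lt_one_of_one_lt_of_neg hb (by norm_num))
  have hpser : Summable fun r : ℕ => ((r + 1 : ℕ) : ℝ) ^ (-(3 / 2) : ℝ) :=
    (summable_nat_add_iff 1).2 (Real.summable_nat_rpow.2 (by norm_num))
  have hfin : Summable fun _ : Fin b => (1 : ℝ) := .of_finite
  have hprod := (hgeom.mul_of_nonneg hpser (fun _ => by positivity) fun _ => by positivity)
    |>.mul_of_nonneg hfin (fun _ => by positivity) fun _ => by positivity
  refine .of_nonneg_of_le (fun k => by positivity) (fun k => ?_)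
    (hprod.comp_injective injective_log_mod_digit)
  have hmod : ((k % b ^ Nat.log b k + 1 : ℕ) : ℝ) ≤ (b : ℝ) ^ Nat.log b k := by
    exact_mod_cast Nat.succ_le_of_lt (Nat.mod_lt k (Nat.pow_pos (NeZero.pos b)))
  simpa using inv_mul_le_rpow_mul_rpow (by positivity) hmod

lemma summable_mualpha {α : ℕ} (hα : 2 ≤ α) :
    Summable fun k : ℕ => ((b : ℝ) ^ mualpha b α k)⁻¹ := by
  have hb : (0 : ℝ) < b := Nat.cast_pos.2 (NeZero.pos b)
  refine .of_nonneg_of_le (fun k => by positivity) (fun k => inv_anti₀ (by positivity) ?_)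
    (summable_inv_pow_log_mul_mod (b := b))
  exact_mod_cast pow_log_mul_mod_le_pow_mualpha hα k

lemma summable_norm_chi_tent {α : ℕ} (hα : 2 ≤ α) (z : ℕ → ZMod b) :
    Summable fun e : Eset b => ‖((b : ℂ) ^ mualpha b α (e / b))⁻¹ * W b e z‖ := by
  rw [← (natEquivEset b).summable_iff]
  refine ((summable_nat_add_iff 1).2 (summable_mualpha (b := b) hα)).congr fun k => ?_
  simp only [Function.comp_apply, natEquivEset_div, norm_mul, norm_W, mul_one, norm_inv, norm_pow,
    Complex.norm_natCast]

end Summability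

section ProductSeries

variable {ι κ R : Type*} [NormedCommRing R]

lemma summable_norm_prod_fin {d : ℕ} {a : Fin d → κ → R} (ha : ∀ j, Summable fun k => ‖a j k‖) :
    Summable fun g : Fin d → κ => ‖∏ j, a j (g j)‖ := by
  induction d with
  | zero => exact .of_finite
  | succ d ih =>
    rw [← (Fin.consEquiv fun _ : Fin (d + 1) => κ).summable_iff]
    refine ((ha 0).mul_norm (ih fun j => ha j.succ)).congr fun x => ?_
    simp [Fin.prod_univ_succ, Fin.consEquiv]

lemma tsum_prod_fin [CompleteSpace R] {d : ℕ} {a : Fin d → κ → R}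
    (ha : ∀ j, Summable fun k => ‖a j k‖) :
    ∑' g : Fin d → κ, ∏ j, a j (g j) = ∏ j, ∑' k, a j k := by
  induction d with
  | zero => simp
  | succ d ih =>
    rw [← (Fin.consEquiv fun _ : Fin (d + 1) => κ).tsum_eq, Fin.prod_univ_succ,
      ← ih fun j => ha j.succ,
      tsum_mul_tsum_of_summable_norm (ha 0) (summable_norm_prod_fin fun j => ha j.succ)]
    simp [Fin.prod_univ_succ, Fin.consEquiv]

variable [Fintype ι] {a : ι → κ → R}

lemma summable_norm_prod_pi (ha : ∀ j, Summable fun k => ‖a j k‖) :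
    Summable fun g : ι → κ => ‖∏ j, a j (g j)‖ := by
  let e := (Fintype.equivFin ι).symm
  rw [← (e.arrowCongr (Equiv.refl κ)).summable_iff]
  refine (summable_norm_prod_fin fun j => ha (e j)).congr fun g => ?_
  simp [← e.prod_comp]

lemma tsum_prod_pi [CompleteSpace R] (ha : ∀ j, Summable fun k => ‖a j k‖) :
    ∑' g : ι → κ, ∏ j, a j (g j) = ∏ j, ∑' k, a j k := by
  let e := (Fintype.equivFin ι).symm
  rw [← (e.arrowCongr (Equiv.refl κ)).tsum_eq, ← e.prod_comp, ← tsum_prod_fin fun j => ha (e j)]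
  simp [← e.prod_comp]

end ProductSeries

section ZeroExtend

variable {ι M : Type*} [Zero M] {u : Finset ι} {E : Set M}

/-- The vector `(k_u, 0)`: the extension by zero of a vector with coordinates in `E` indexed by
`u`. -/
noncomputable def zeroExtend (g : u → E) : ι → M :=
  Function.extend Subtype.val (fun j => (g j : M)) 0

lemma zeroExtend_apply (g : u → E) (j : u) : zeroExtend g j = g j :=
  Subtype.val_injective.extend_apply _ _ j

lemma zeroExtend_of_notMem (g : u → E) {j : ι} (hj : j ∉ u) : zeroExtend g j = 0 :=
  Function.extend_apply' _ _ j fun ⟨i, hi⟩ => hj (hi ▸ i.2)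

lemma zeroExtend_mem (g : u → E) {j : ι} (hj : j ∈ u) : zeroExtend g j ∈ E :=
  (zeroExtend_apply g ⟨j, hj⟩).symm ▸ (g ⟨j, hj⟩).2

lemma zeroExtend_injective : Function.Injective (zeroExtend : (u → E) → ι → M) :=
  fun g g' h => funext fun j => Subtype.ext <| by
    rw [← zeroExtend_apply g, h, zeroExtend_apply]

lemma exists_zeroExtend_eq {f : ι → M} (hE : ∀ j ∈ u, f j ∈ E) (hzero : ∀ j ∉ u, f j = 0) :
    ∃ g : u → E, zeroExtend g = f := by
  refine ⟨fun j => ⟨f j, hE j j.2⟩, funext fun j => ?_⟩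
  by_cases hj : j ∈ u
  · exact zeroExtend_apply _ ⟨j, hj⟩
  · rw [zeroExtend_of_notMem _ hj, hzero j hj]

lemma tsum_subtype_eq_tsum_indicator_zeroExtend {A : Type*} [AddCommMonoid A] [TopologicalSpace A]
    (S : Set (ι → M)) (F : (ι → M) → A) :
    ∑' f : {f : ι → M // (∀ j ∈ u, f j ∈ E) ∧ (∀ j ∉ u, f j = 0) ∧ f ∈ S}, F f =
      ∑' g : u → E, S.indicator F (zeroExtend g) := by
  let T : Set (ι → M) := {f | (∀ j ∈ u, f j ∈ E) ∧ (∀ j ∉ u, f j = 0) ∧ f ∈ S}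
  have hsupport : Function.support (T.indicator F) ⊆ Set.range (zeroExtend : (u → E) → ι → M) :=
    fun f hf =>
      have hT : f ∈ T := Set.mem_of_indicator_ne_zero hf
      exists_zeroExtend_eq hT.1 hT.2.1
  have hmem (g : u → E) : zeroExtend g ∈ T ↔ zeroExtend g ∈ S :=
    ⟨fun h => h.2.2, fun h => ⟨fun _ => zeroExtend_mem g, fun _ => zeroExtend_of_notMem g, h⟩⟩
  classical
  calc ∑' f : T, F f = ∑' g : u → E, T.indicator F (zeroExtend g) := by
        rw [_root_.tsum_subtype, zeroExtend_injective.tsum_eq hsupport]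
    _ = ∑' g : u → E, S.indicator F (zeroExtend g) := by
        simp only [Set.indicator_apply, hmem]

end ZeroExtend

section Criterion

lemma average_prod_one_add {ι H R : Type*} [Field R] (J : Finset ι) {P : Finset H}
    (hP : (#P : R) ≠ 0) (c : ι → R) (x : H → ι → R) :
    (#P : R)⁻¹ * ∑ h ∈ P, ∏ j ∈ J, (1 + c j * x h j) =
      1 + ∑ u ∈ J.powerset with u.Nonempty,
        (∏ j ∈ u, c j) * ((#P : R)⁻¹ * ∑ h ∈ P, ∏ j ∈ u, x h j) := by
  classical
  have hempty : J.powerset.filter (fun u => ¬ u.Nonempty) = {∅} := by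
    ext u
    simp +contextual [not_nonempty_iff_eq_empty]
  calc (#P : R)⁻¹ * ∑ h ∈ P, ∏ j ∈ J, (1 + c j * x h j)
      = ∑ u ∈ J.powerset, (∏ j ∈ u, c j) * ((#P : R)⁻¹ * ∑ h ∈ P, ∏ j ∈ u, x h j) := by
        simp only [prod_one_add, prod_mul_distrib]
        rw [sum_comm, mul_sum]
        simp only [← mul_sum, mul_left_comm]
    _ = _ := by
        rw [← sum_filter_not_add_sum_filter _ fun u : Finset ι => u.Nonempty, hempty]
        simp [hP]

lemma sqrt_prod_mul_sqrt_pow_card {ι : Type*} {u : Finset ι} {γ : ι → ℝ} (hγ : ∀ j ∈ u, 0 ≤ γ j)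
    (D : ℝ) : √(∏ j ∈ u, γ j) * √D ^ #u = ∏ j ∈ u, (√(γ j) * √D) := by
  rw [Real.sqrt_prod u hγ, prod_mul_distrib, prod_const]

variable {b : ℕ} {ι : Type*} {u : Finset ι}

lemma prod_mul_W_eq_mul_prod_zeroExtend {J : Finset ι} (huJ : u ⊆ J) (α : ℕ)
    (z : ι → ℕ → ZMod b) (g : u → Eset b) :
    ∏ j, (((b : ℂ) ^ mualpha b α (g j / b))⁻¹ * W b (g j) (z j)) =
      ((b : ℂ) ^ ∑ j ∈ u, mualpha b α (zeroExtend g j / b))⁻¹ *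
        ∏ j ∈ J, W b (zeroExtend g j) (z j) := by
  rw [← prod_subset huJ fun j _ hj => by rw [zeroExtend_of_notMem g hj, W_zero],
    ← prod_pow_eq_pow_sum, ← prod_inv_distrib, ← prod_mul_distrib, ← prod_coe_sort u]
  simp only [zeroExtend_apply]

lemma prod_chi_tent [b.AtLeastTwo] {α : ℕ} (hα : 2 ≤ α) (z : ι → ℕ → ZMod b) :
    ∏ j ∈ u, chi b α (tent b (z j)) = ∑' g : u → Eset b,
      ∏ j, (((b : ℂ) ^ mualpha b α (g j / b))⁻¹ * W b (g j) (z j)) := by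
  rw [tsum_prod_pi fun j : u => summable_norm_chi_tent hα (z j), ← prod_coe_sort]
  simp only [chi_tent]

lemma average_prod_chi_tent [Fact b.Prime] {α m n : ℕ} (hα : 2 ≤ α) (hmn : m ≤ n) {p : (ZMod b)[X]}
    (hp : p.degree = n) {J : Finset ι} (huJ : u ⊆ J) (q : ι → (ZMod b)[X]) :
    ((b : ℂ) ^ m)⁻¹ * ∑ h ∈ range (b ^ m), ∏ j ∈ u, chi b α (tent b (hoPoint b p (q j) n h)) =
      ((∑' f : {f : ι → ℕ // (∀ j ∈ u, f j ∈ Eset b) ∧ (∀ j ∉ u, f j = 0) ∧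
          f ∈ dualLattice m n p J q}, ((b : ℝ) ^ ∑ j ∈ u, mualpha b α (f.1 j / b))⁻¹ : ℝ) : ℂ) := by
  let F (f : ι → ℕ) : ℂ := ((b : ℂ) ^ ∑ j ∈ u, mualpha b α (f j / b))⁻¹
  let z (h : ℕ) (j : ι) : ℕ → ZMod b := hoPoint b p (q j) n h
  have hterm (g : u → Eset b) :
      ((b : ℂ) ^ m)⁻¹ * ∑ h ∈ range (b ^ m),
          ∏ j, (((b : ℂ) ^ mualpha b α (g j / b))⁻¹ * W b (g j) (z h j)) =
        (dualLattice m n p J q).indicator F (zeroExtend g) := by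
    simp only [prod_mul_W_eq_mul_prod_zeroExtend huJ, ← mul_sum]
    rw [mul_left_comm, average_prod_W_hoPoint hmn hp]
    classical
    simp [F, Set.indicator_apply]
  calc ((b : ℂ) ^ m)⁻¹ * ∑ h ∈ range (b ^ m), ∏ j ∈ u, chi b α (tent b (z h j))
      = ∑' g : u → Eset b, ((b : ℂ) ^ m)⁻¹ * ∑ h ∈ range (b ^ m),
          ∏ j, (((b : ℂ) ^ mualpha b α (g j / b))⁻¹ * W b (g j) (z h j)) := by
        simp only [prod_chi_tent hα]
        rw [← Summable.tsum_finsetSum fun h _ =>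
          (summable_norm_prod_pi fun j : u => summable_norm_chi_tent hα (z h j)).of_norm,
          tsum_mul_left]
    _ = ∑' g : u → Eset b, (dualLattice m n p J q).indicator F (zeroExtend g) := tsum_congr hterm
    _ = _ := by
        rw [← tsum_subtype_eq_tsum_indicator_zeroExtend, Complex.ofReal_tsum]
        simp only [F, Complex.ofReal_inv, Complex.ofReal_pow, Complex.ofReal_natCast]

end Criterion

/-- The quality criterion `B_α(q,p)` can be computed as an average over the higher
order polynomial lattice point set:
`B_α(q,p) = -1 + b^{-m} Σ_h ∏_j (1 + γ_j^{1/2} D^{1/2} χ_b(Φ_b(z_{h,j})))`. -/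
theorem Bcrit_eq_average (b α m n s : ℕ) [Fact b.Prime] (hα : 2 ≤ α) (hm : 0 < m)
    (hmn : m ≤ n) (hs : 0 < s) (p : Polynomial (ZMod b))
    (hpdeg : p.degree = (n : WithBot ℕ)) (γ : ℕ → ℝ) (hγ : ∀ j, 0 ≤ γ j)
    (D : ℝ) (hD : 0 < D) (q : ℕ → Polynomial (ZMod b)) :
    (Bcrit b α m n γ D p s q : ℂ) =
      -1 + ((b : ℂ) ^ m)⁻¹ * ∑ h ∈ Finset.range (b ^ m), ∏ j ∈ Finset.range s,
        (1 + (Real.sqrt (γ j) * Real.sqrt D : ℝ) *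
          chi b α (tent b (hoPoint b p (q j) n h))) := by
  have hcard : (#(range (b ^ m)) : ℂ) ≠ 0 := by simp [NeZero.ne b]
  have hexpand := average_prod_one_add (range s) hcard (fun j => (√(γ j) * √D : ℝ))
    fun h j => chi b α (tent b (hoPoint b p (q j) n h))
  rw [card_range, Nat.cast_pow] at hexpand
  rw [hexpand, neg_add_cancel_left, Bcrit, Complex.ofReal_sum]
  refine sum_congr rfl fun u hu => ?_
  have hus : u ⊆ range s := mem_powerset.1 (mem_filter.1 hu).1
  rw [average_prod_chi_tent hα hmn hpdeg hus, sqrt_prod_mul_sqrt_pow_card fun j _ => hγ j,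
    Complex.ofReal_mul, Complex.ofReal_prod]
  rfl

end QMC
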